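/- For k = 1, …, K let Ã^(k) be a real n_a×d̃_k matrix, let Q^(k) be a real n_a×r_k matrix with orthonormal columns whose column space equals the column space of Ã^(k), and set W_Q = [Q^(1), …, Q^(K)] ∈ ℝ^{n_a×(r_1+⋯+r_K)} (horizontal concatenation). Let d̂ ≤ n_a, and let λ_1 ≥ … ≥ λ_{n_a} be the eigenvalues of W_Q W_Qᵀ counted with multiplicity. Then the minimum of Σ_{k=1}^K ‖Ã^(k)G^(k) − Z‖_F² over all Z ∈ ℝ^{n_a×d̂} with ZᵀZ = I_{d̂} and all G^(k) ∈ ℝ^{d̃_k×d̂} equals K·d̂ − Σ_{j=1}^{d̂} λ_j. Moreover, for any d̂×d̂ orthogonal matrix O, this minimum is attained at Z* = U_{d̂}O, where the columns of U_{d̂} are orthonormal eigenvectors of W_Q W_Qᵀ corresponding to λ_1, …, λ_{d̂}, together with any G^(k) satisfying Ã^(k)G^(k) = Q^(k)Q^(k)ᵀZ*. -/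

import Mathlib

open Matrix

/-- Squared Frobenius norm of a real matrix: `‖M‖_F² = tr(MᵀM)`. -/
noncomputable def frobSq {n m : ℕ} (M : Matrix (Fin n) (Fin m) ℝ) : ℝ := (Mᵀ * M).trace

lemma aux_factor {n a b : ℕ} (A : Matrix (Fin n) (Fin a) ℝ) (B : Matrix (Fin n) (Fin b) ℝ)
    (h : Submodule.span ℝ (Set.range Aᵀ) ≤ Submodule.span ℝ (Set.range Bᵀ)) :
    ∃ C : Matrix (Fin b) (Fin a) ℝ, A = B * C := by
  have h1 : ∀ j : Fin a, ∃ c : Fin b → ℝ, ∑ i, c i • Bᵀ i = Aᵀ j := by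
    intro j
    have := h (Submodule.subset_span (Set.mem_range_self j))
    exact (Submodule.mem_span_range_iff_exists_fun ℝ).1 this
  choose c hc using h1
  refine ⟨Matrix.of fun i j => c j i, ?_⟩
  ext i j
  have := congrFun (hc j) i
  simp only [Finset.sum_apply, Pi.smul_apply, smul_eq_mul, Matrix.transpose_apply] at this
  rw [← this, Matrix.mul_apply]
  exact Finset.sum_congr rfl fun x _ => mul_comm _ _

lemma aux_frob_nonneg {n m : ℕ} (M : Matrix (Fin n) (Fin m) ℝ) : 0 ≤ frobSq M := by
  unfold frobSq
  simp only [Matrix.trace, Matrix.diag_apply, Matrix.mul_apply, Matrix.transpose_apply]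
  exact Finset.sum_nonneg fun i _ => Finset.sum_nonneg fun j _ => mul_self_nonneg _

lemma aux_frob {n r d : ℕ} (Q : Matrix (Fin n) (Fin r) ℝ) (hQ : Qᵀ * Q = 1)
    (Y : Matrix (Fin r) (Fin d) ℝ) (Z : Matrix (Fin n) (Fin d) ℝ) (hZ : Zᵀ * Z = 1) :
    frobSq (Q * Y - Z) = d - (Zᵀ * (Q * Qᵀ) * Z).trace + frobSq (Y - Qᵀ * Z) := by
  have e1 : (Q * Y - Z)ᵀ * (Q * Y - Z) = Yᵀ * Y - Yᵀ * (Qᵀ * Z) - Zᵀ * Q * Y + 1 := by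
    rw [← hZ, Matrix.transpose_sub, Matrix.transpose_mul, Matrix.sub_mul, Matrix.mul_sub,
      Matrix.mul_sub]
    have : Yᵀ * Qᵀ * (Q * Y) = Yᵀ * Y := by
      rw [Matrix.mul_assoc, ← Matrix.mul_assoc Qᵀ, hQ, Matrix.one_mul]
    rw [this]
    simp only [Matrix.mul_assoc]
    abel
  have e2 : (Y - Qᵀ * Z)ᵀ * (Y - Qᵀ * Z)
      = Yᵀ * Y - Yᵀ * (Qᵀ * Z) - Zᵀ * Q * Y + Zᵀ * (Q * Qᵀ) * Z := by
    rw [Matrix.transpose_sub, Matrix.transpose_mul, Matrix.sub_mul, Matrix.mul_sub,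
      Matrix.mul_sub, Matrix.transpose_transpose]
    simp only [Matrix.mul_assoc]
    abel
  unfold frobSq
  rw [e1, e2, Matrix.trace_add, Matrix.trace_add, Matrix.trace_one, Fintype.card_fin]
  ring

lemma aux_WQ {K na : ℕ} (r : Fin K → ℕ)
    (Q : (k : Fin K) → Matrix (Fin na) (Fin (r k)) ℝ)
    (WQ : Matrix (Fin na) ((k : Fin K) × Fin (r k)) ℝ)
    (hWQ : ∀ (i : Fin na) (k : Fin K) (j : Fin (r k)), WQ i ⟨k, j⟩ = Q k i j) :
    WQ * WQᵀ = ∑ k, Q k * (Q k)ᵀ := by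
  ext i j
  rw [Matrix.sum_apply, Matrix.mul_apply, Fintype.sum_sigma]
  simp [Matrix.mul_apply, hWQ]

lemma aux_sum {na d : ℕ} (hd : d ≤ na) (f : Fin na → ℝ) :
    ∑ j : Fin d, f (Fin.castLE hd j) = ∑ i : Fin na, if (i : ℕ) < d then f i else 0 := by
  rw [← Finset.sum_filter]
  refine Finset.sum_bij (fun j _ => Fin.castLE hd j) ?_ ?_ ?_ ?_
  · intro a _; simp
  · intro a _ b _ h; simpa using h
  · intro b hb
    exact ⟨⟨b, by simpa using hb⟩, Finset.mem_univ _, rfl⟩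
  · intro a _; rfl

lemma aux_kyfan {na d : ℕ} (hd : d ≤ na) (μ : Fin na → ℝ) (hμ : Antitone μ)
    (V : Matrix (Fin na) (Fin d) ℝ) (hV : Vᵀ * V = 1) :
    (Vᵀ * Matrix.diagonal μ * V).trace ≤ ∑ j : Fin d, μ (Fin.castLE hd j) := by
  have hw1 : (Vᵀ * Matrix.diagonal μ * V).trace = ∑ i, μ i * (V * Vᵀ) i i := by
    rw [Matrix.mul_assoc, Matrix.trace_mul_comm, Matrix.mul_assoc]
    simp [Matrix.trace, Matrix.diagonal_mul]
  have hw2 : ∑ i, (V * Vᵀ) i i = (d : ℝ) := by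
    have : (V * Vᵀ).trace = (d : ℝ) := by
      rw [Matrix.trace_mul_comm, hV, Matrix.trace_one, Fintype.card_fin]
    simpa [Matrix.trace] using this
  have h0 : ∀ i, 0 ≤ (V * Vᵀ) i i := by
    intro i
    rw [Matrix.mul_apply]
    exact Finset.sum_nonneg fun j _ => mul_self_nonneg _
  have h1 : ∀ i, (V * Vᵀ) i i ≤ 1 := by
    intro i
    have hs : (V * Vᵀ) * (V * Vᵀ)ᵀ = V * Vᵀ := by
      rw [Matrix.transpose_mul, Matrix.transpose_transpose, Matrix.mul_assoc,
        ← Matrix.mul_assoc Vᵀ, hV, Matrix.one_mul]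
    have h2 : (V * Vᵀ) i i * (V * Vᵀ) i i ≤ ((V * Vᵀ) * (V * Vᵀ)ᵀ) i i := by
      rw [Matrix.mul_apply (M := V * Vᵀ)]
      exact Finset.single_le_sum (f := fun j => (V * Vᵀ) i j * (V * Vᵀ)ᵀ j i)
        (fun j _ => mul_self_nonneg _) (Finset.mem_univ i)
    rw [hs] at h2
    nlinarith [h0 i]
  rw [hw1, aux_sum]
  have hone : ∑ i : Fin na, (if (i : ℕ) < d then (1 : ℝ) else 0) = d := by
    rw [← aux_sum hd (fun _ => 1)]; simp
  rcases Nat.eq_zero_or_pos d with h | h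
  · subst h
    have : ∀ i, (V * Vᵀ) i i = 0 := by
      intro i; simp [Matrix.mul_apply]
    simp [this]
  · set c := μ ⟨d - 1, by omega⟩ with hc
    have key : ∑ i, (μ i - c) * ((V * Vᵀ) i i - (if (i : ℕ) < d then (1 : ℝ) else 0)) ≤ 0 := by
      refine Finset.sum_nonpos fun i _ => ?_
      split_ifs with hi
      · have : c ≤ μ i := hμ (by rw [Fin.le_def]; simp; omega)
        nlinarith [h1 i]
      · have : μ i ≤ c := hμ (by rw [Fin.le_def]; simp; omega)
        nlinarith [h0 i]
    have e : ∑ i, (μ i - c) * ((V * Vᵀ) i i - (if (i : ℕ) < d then (1 : ℝ) else 0))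
        = ∑ i, μ i * (V * Vᵀ) i i - (∑ i : Fin na, if (i : ℕ) < d then μ i else 0)
          - c * (∑ i, (V * Vᵀ) i i - ∑ i : Fin na, (if (i : ℕ) < d then (1 : ℝ) else 0)) := by
      rw [mul_sub, Finset.mul_sum, Finset.mul_sum, ← Finset.sum_sub_distrib,
        ← Finset.sum_sub_distrib, ← Finset.sum_sub_distrib]
      refine Finset.sum_congr rfl fun i _ => ?_
      split_ifs <;> ring
    rw [hw2, hone] at e
    linarith

/-- Theorem 1, linear kernel integration: with `Q^(k)` orthonormal bases of the
column spaces of `Ã^(k)`, `W_Q` their horizontal concatenation, and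
`W_Q W_Qᵀ = U diag(μ) Uᵀ` an orthogonal eigendecomposition with `μ` antitone, the minimum of
`Σ_k ‖Ã^(k)G^(k) − Z‖_F²` over `ZᵀZ = I` and all `G^(k)` equals `K·d̂ − Σ_{j<d̂} μ_j`, and for
any orthogonal `O` it is attained at `Z* = U_{d̂}O` together with any `G^(k)` satisfying
`Ã^(k)G^(k) = Q^(k)Q^(k)ᵀZ*`. -/
theorem stmt4 {K na dhat : ℕ} (hd : dhat ≤ na)
    (dt r : Fin K → ℕ)
    (At : (k : Fin K) → Matrix (Fin na) (Fin (dt k)) ℝ)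
    (Q : (k : Fin K) → Matrix (Fin na) (Fin (r k)) ℝ)
    (hQ : ∀ k, (Q k)ᵀ * Q k = 1)
    (hcol : ∀ k, Submodule.span ℝ (Set.range (At k)ᵀ) = Submodule.span ℝ (Set.range (Q k)ᵀ))
    (WQ : Matrix (Fin na) ((k : Fin K) × Fin (r k)) ℝ)
    (hWQ : ∀ (i : Fin na) (k : Fin K) (j : Fin (r k)), WQ i ⟨k, j⟩ = Q k i j)
    (U : Matrix (Fin na) (Fin na) ℝ) (hU : Uᵀ * U = 1)
    (μ : Fin na → ℝ) (hμ : Antitone μ)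
    (hdiag : WQ * WQᵀ = U * Matrix.diagonal μ * Uᵀ) :
    IsLeast {t : ℝ | ∃ (Z : Matrix (Fin na) (Fin dhat) ℝ)
        (G : (k : Fin K) → Matrix (Fin (dt k)) (Fin dhat) ℝ),
        Zᵀ * Z = 1 ∧ t = ∑ k, frobSq (At k * G k - Z)}
      ((K : ℝ) * (dhat : ℝ) - ∑ j : Fin dhat, μ (Fin.castLE hd j)) ∧
    ∀ O : Matrix (Fin dhat) (Fin dhat) ℝ, Oᵀ * O = 1 →
      (U.submatrix id (Fin.castLE hd) * O)ᵀ * (U.submatrix id (Fin.castLE hd) * O) = 1 ∧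
      (∃ G : (k : Fin K) → Matrix (Fin (dt k)) (Fin dhat) ℝ,
        ∀ k, At k * G k = Q k * (Q k)ᵀ * (U.submatrix id (Fin.castLE hd) * O)) ∧
      ∀ G : (k : Fin K) → Matrix (Fin (dt k)) (Fin dhat) ℝ,
        (∀ k, At k * G k = Q k * (Q k)ᵀ * (U.submatrix id (Fin.castLE hd) * O)) →
        ∑ k, frobSq (At k * G k - U.submatrix id (Fin.castLE hd) * O)
          = (K : ℝ) * (dhat : ℝ) - ∑ j : Fin dhat, μ (Fin.castLE hd j) := by
  have hW := aux_WQ r Q WQ hWQ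
  have hUU : U * Uᵀ = 1 := mul_eq_one_comm.1 hU
  have htr : ∀ Z : Matrix (Fin na) (Fin dhat) ℝ,
      ∑ k, (Zᵀ * (Q k * (Q k)ᵀ) * Z).trace = (Zᵀ * (WQ * WQᵀ) * Z).trace := by
    intro Z
    rw [hW, Matrix.mul_sum, Matrix.sum_mul, Matrix.trace_sum]
  have part2 : ∀ O : Matrix (Fin dhat) (Fin dhat) ℝ, Oᵀ * O = 1 →
      (U.submatrix id (Fin.castLE hd) * O)ᵀ * (U.submatrix id (Fin.castLE hd) * O) = 1 ∧
      (∃ G : (k : Fin K) → Matrix (Fin (dt k)) (Fin dhat) ℝ,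
        ∀ k, At k * G k = Q k * (Q k)ᵀ * (U.submatrix id (Fin.castLE hd) * O)) ∧
      ∀ G : (k : Fin K) → Matrix (Fin (dt k)) (Fin dhat) ℝ,
        (∀ k, At k * G k = Q k * (Q k)ᵀ * (U.submatrix id (Fin.castLE hd) * O)) →
        ∑ k, frobSq (At k * G k - U.submatrix id (Fin.castLE hd) * O)
          = (K : ℝ) * (dhat : ℝ) - ∑ j : Fin dhat, μ (Fin.castLE hd j) := by
    intro O hO
    have hOO : O * Oᵀ = 1 := mul_eq_one_comm.1 hO
    set S := U.submatrix id (Fin.castLE hd) with hS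
    have hinj : Function.Injective (Fin.castLE hd) := Fin.castLE_injective hd
    have hSS : Sᵀ * S = 1 := by
      have : Sᵀ * S = (Uᵀ * U).submatrix (Fin.castLE hd) (Fin.castLE hd) := by
        ext i j; simp [hS, Matrix.mul_apply]
      rw [this, hU, Matrix.submatrix_one _ hinj]
    have hZ : (S * O)ᵀ * (S * O) = 1 := by
      rw [Matrix.transpose_mul, Matrix.mul_assoc, ← Matrix.mul_assoc Sᵀ, hSS, Matrix.one_mul, hO]
    refine ⟨hZ, ?_, ?_⟩
    · have : ∀ k, ∃ C, Q k = At k * C := fun k => aux_factor _ _ (hcol k).ge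
      choose C hC using this
      refine ⟨fun k => C k * ((Q k)ᵀ * (S * O)), fun k => ?_⟩
      rw [← Matrix.mul_assoc, ← hC, Matrix.mul_assoc (Q k)]
    · intro G hG
      have h1 : ∀ k, frobSq (At k * G k - S * O)
          = dhat - ((S * O)ᵀ * (Q k * (Q k)ᵀ) * (S * O)).trace := by
        intro k
        rw [hG k, Matrix.mul_assoc (Q k), aux_frob (Q k) (hQ k) _ _ hZ]
        simp [frobSq]
      rw [Finset.sum_congr rfl fun k _ => h1 k, Finset.sum_sub_distrib, htr, hdiag]
      have h2 : ((S * O)ᵀ * (U * Matrix.diagonal μ * Uᵀ) * (S * O)).trace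
          = ∑ j : Fin dhat, μ (Fin.castLE hd j) := by
        have h3 : Sᵀ * (U * Matrix.diagonal μ * Uᵀ) * S
            = (Matrix.diagonal μ).submatrix (Fin.castLE hd) (Fin.castLE hd) := by
          have : Sᵀ * (U * Matrix.diagonal μ * Uᵀ) * S
              = (Uᵀ * (U * Matrix.diagonal μ * Uᵀ) * U).submatrix
                (Fin.castLE hd) (Fin.castLE hd) := by
            ext i j; simp only [hS, Matrix.mul_apply, Matrix.submatrix_apply, Matrix.transpose_apply, id]
          rw [this]
          congr 1
          rw [Matrix.mul_assoc U, ← Matrix.mul_assoc Uᵀ, hU, Matrix.one_mul, Matrix.mul_assoc, hU,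
            Matrix.mul_one]
        have h4 : (S * O)ᵀ * (U * Matrix.diagonal μ * Uᵀ) * (S * O)
            = Oᵀ * ((Sᵀ * (U * Matrix.diagonal μ * Uᵀ) * S) * O) := by
          rw [Matrix.transpose_mul]; simp only [Matrix.mul_assoc]
        rw [h4, Matrix.trace_mul_comm, Matrix.mul_assoc, hOO, Matrix.mul_one, h3]
        simp [Matrix.trace]
      rw [h2]
      simp
  refine ⟨⟨?_, ?_⟩, part2⟩
  · obtain ⟨h1, ⟨G, hG⟩, h3⟩ := part2 1 (by simp)
    exact ⟨_, G, h1, (h3 G hG).symm⟩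
  · rintro t ⟨Z, G, hZ, rfl⟩
    have : ∀ k, ∃ C, At k = Q k * C := fun k => aux_factor _ _ (hcol k).le
    choose C hC using this
    have h1 : ∀ k, dhat - (Zᵀ * (Q k * (Q k)ᵀ) * Z).trace ≤ frobSq (At k * G k - Z) := by
      intro k
      rw [hC k, Matrix.mul_assoc (Q k) (C k), aux_frob (Q k) (hQ k) _ _ hZ]
      linarith [aux_frob_nonneg (C k * G k - (Q k)ᵀ * Z)]
    have h2 := Finset.sum_le_sum (s := Finset.univ) fun k _ => h1 k
    rw [Finset.sum_sub_distrib, htr, hdiag] at h2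
    have hV : (Uᵀ * Z)ᵀ * (Uᵀ * Z) = 1 := by
      rw [Matrix.transpose_mul, Matrix.transpose_transpose, Matrix.mul_assoc,
        ← Matrix.mul_assoc U, hUU, Matrix.one_mul, hZ]
    have h3 := aux_kyfan hd μ hμ (Uᵀ * Z) hV
    have h4 : (Uᵀ * Z)ᵀ * Matrix.diagonal μ * (Uᵀ * Z)
        = Zᵀ * (U * Matrix.diagonal μ * Uᵀ) * Z := by
      rw [Matrix.transpose_mul, Matrix.transpose_transpose]; simp only [Matrix.mul_assoc]
    rw [h4] at h3
    simp only [Finset.sum_const, Finset.card_univ, Fintype.card_fin, nsmul_eq_mul] at h2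
    linarith
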